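/- The vector e_{0,0,0} is cyclic: the only linear subspace of V that contains e_{0,0,0} and is invariant under all six operators P₁, P₋₁, Λ, Λ⁻¹, L⁺, L⁻ is V itself. -/

import Mathlib

/-! Each of `Λ`, `Λ⁻¹`, `P₁` and `L⁻` maps every basis vector to a nonzero multiple of another one,
since `q ^ a < 1` for `a > 0` keeps the square roots away from zero. So an invariant subspace
containing `e_{0,0,0}` contains the basis vectors on the whole path
`e_{0,0,0} → e_{0,m,0} → e_{n,m,n} → e_{n,m,j}`, traced by powers of `Λ` or `Λ⁻¹`, then by `P₁ⁿ`,
then by `(L⁻)ⁿ⁻ʲ`; the last exponent is nonnegative because `j ≤ n` on the lattice. -/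

/- The irreducible Hilbert-space representation of highest weight `w` of the q-Euclidean
algebra `U_q(e³)` (Theorem 3 of the paper): `S` is the index set of the q-lattice,
`V` the space of finitely supported functions `S → ℂ` with canonical basis `e`,
and `P0, P1, Pm1, Lam, LamInv, K, Lp, Lm` realize the generators
`p⁰, p¹, p⁻¹, Λ, Λ⁻¹, k¹, L^{01}, L^{−1,0}`. -/

noncomputable section

/-- The q-lattice index set `S = {(π₀,π₁,j) ∈ ℤ³ : π₀ ≥ 0, j ≤ π₀}`. -/
structure SIdx : Type where
  π0 : ℤ
  π1 : ℤ
  j : ℤ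
  hπ0 : 0 ≤ π0
  hj : j ≤ π0

instance : DecidableEq SIdx := fun _ _ => Classical.dec _

/-- `V`: finitely supported functions `S → ℂ`. -/
abbrev V : Type := SIdx →₀ ℂ

/-- The canonical basis vector `e_{π₀,π₁,j}`. -/
def e (s : SIdx) : V := Finsupp.single s 1

/-- The linear operator on `V` determined by its values on the canonical basis. -/
def opOf (g : SIdx → V) : V →ₗ[ℂ] V :=
  Finsupp.lsum ℂ fun s => LinearMap.toSpanSingleton ℂ V (g s)

/-- `P₀ e_{π₀,π₁,j} = ε M (1+q⁻¹)^(1/2) q^(2+π₀+π₁) e_{π₀,π₁,j}`. -/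
def P0 (q M ε : ℝ) : V →ₗ[ℂ] V :=
  opOf fun s => ((ε * M * Real.sqrt (1 + q⁻¹) * q ^ (2 + s.π0 + s.π1) : ℝ) : ℂ) • e s

/-- `P₁ e_{π₀,π₁,j} = M (1−q^(2π₀+2))^(1/2) q^(1+π₁) e_{π₀+1,π₁,j+1}`. -/
def P1 (q M : ℝ) : V →ₗ[ℂ] V :=
  opOf fun s => ((M * Real.sqrt (1 - q ^ (2 * s.π0 + 2)) * q ^ (1 + s.π1) : ℝ) : ℂ) •
    e ⟨s.π0 + 1, s.π1, s.j + 1, by have h0 := s.hπ0; have h1 := s.hj; omega, by have h0 := s.hπ0; have h1 := s.hj; omega⟩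

/-- `P₋₁ e_{π₀,π₁,j} = M (1−q^(2π₀))^(1/2) q^(1/2+π₁) e_{π₀−1,π₁,j−1}` (zero if `π₀ = 0`). -/
def Pm1 (q M : ℝ) : V →ₗ[ℂ] V :=
  opOf fun s =>
    if h : 0 < s.π0 then
      ((M * Real.sqrt (1 - q ^ (2 * s.π0)) * q ^ ((1 : ℝ) / 2 + (s.π1 : ℝ)) : ℝ) : ℂ) •
        e ⟨s.π0 - 1, s.π1, s.j - 1, by have h0 := s.hπ0; have h1 := s.hj; omega, by have h0 := s.hπ0; have h1 := s.hj; omega⟩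
    else 0

/-- `Λ e_{π₀,π₁,j} = e_{π₀,π₁+1,j}`. -/
def Lam : V →ₗ[ℂ] V := opOf fun s => e ⟨s.π0, s.π1 + 1, s.j, s.hπ0, s.hj⟩

/-- `Λ⁻¹ e_{π₀,π₁,j} = e_{π₀,π₁−1,j}`. -/
def LamInv : V →ₗ[ℂ] V := opOf fun s => e ⟨s.π0, s.π1 - 1, s.j, s.hπ0, s.hj⟩

/-- `K e_{π₀,π₁,j} = q^(2j+w) e_{π₀,π₁,j}`. -/
def K (q w : ℝ) : V →ₗ[ℂ] V :=
  opOf fun s => ((q ^ (2 * (s.j : ℝ) + w) : ℝ) : ℂ) • e s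

/-- `L⁺ e_{π₀,π₁,j} = q^(−3/2−π₀) [(1+q^(π₀−j−w))(1−q^(π₀−j))/((q⁻¹−1)(1−q))]^(1/2)
    e_{π₀,π₁,j+1}` (zero if `j = π₀`). -/
def Lp (q w : ℝ) : V →ₗ[ℂ] V :=
  opOf fun s =>
    if h : s.j < s.π0 then
      ((q ^ (-(3 : ℝ) / 2 - (s.π0 : ℝ)) *
          Real.sqrt ((1 + q ^ ((s.π0 : ℝ) - (s.j : ℝ) - w)) *
            (1 - q ^ ((s.π0 : ℝ) - (s.j : ℝ))) / ((q⁻¹ - 1) * (1 - q))) : ℝ) : ℂ) •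
        e ⟨s.π0, s.π1, s.j + 1, s.hπ0, by have h0 := s.hπ0; have h1 := s.hj; omega⟩
    else 0

/-- `L⁻ e_{π₀,π₁,j} = q^(−π₀) [(1+q^(π₀−j+1−w))(1−q^(π₀−j+1))/((q⁻¹−1)(1−q))]^(1/2)
    e_{π₀,π₁,j−1}`. -/
def Lm (q w : ℝ) : V →ₗ[ℂ] V :=
  opOf fun s =>
    ((q ^ (-(s.π0 : ℝ)) *
        Real.sqrt ((1 + q ^ ((s.π0 : ℝ) - (s.j : ℝ) + 1 - w)) *
          (1 - q ^ ((s.π0 : ℝ) - (s.j : ℝ) + 1)) / ((q⁻¹ - 1) * (1 - q))) : ℝ) : ℂ) •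
      e ⟨s.π0, s.π1, s.j - 1, s.hπ0, by have h0 := s.hπ0; have h1 := s.hj; omega⟩

lemma opOf_e (g : SIdx → V) (s : SIdx) : opOf g (e s) = g s := by
  simp [opOf, e]

lemma span_range_e : Submodule.span ℂ (Set.range e) = ⊤ := by
  have h : e = Finsupp.basisSingleOne (R := ℂ) := Finsupp.coe_basisSingleOne.symm
  rw [h, Module.Basis.span_eq]

lemma mem_of_apply_eq_smul {𝕜 E : Type*} [DivisionSemiring 𝕜] [AddCommMonoid E] [Module 𝕜 E]
    {W : Submodule 𝕜 E} {T : Module.End 𝕜 E} (hT : W ∈ T.invtSubmodule) {x y : E} {c : 𝕜}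
    (hc : c ≠ 0) (hxy : T x = c • y) (hx : x ∈ W) : y ∈ W :=
  (W.smul_mem_iff hc).mp (hxy ▸ hT hx)

/-- The coefficient of `e_{π₀+1,π₁,j+1}` in `P₁ e_{π₀,π₁,j}`, as a real number. -/
def P1Coeff (q M : ℝ) (s : SIdx) : ℝ :=
  M * Real.sqrt (1 - q ^ (2 * s.π0 + 2)) * q ^ (1 + s.π1)

/-- The coefficient of `e_{π₀,π₁,j-1}` in `L⁻ e_{π₀,π₁,j}`, as a real number. -/
def LmCoeff (q w : ℝ) (s : SIdx) : ℝ :=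
  q ^ (-(s.π0 : ℝ)) *
    Real.sqrt ((1 + q ^ ((s.π0 : ℝ) - (s.j : ℝ) + 1 - w)) *
      (1 - q ^ ((s.π0 : ℝ) - (s.j : ℝ) + 1)) / ((q⁻¹ - 1) * (1 - q)))

section Action

variable {n m j : ℤ} {hn : 0 ≤ n} {hj : j ≤ n}

lemma Lam_e : Lam (e ⟨n, m, j, hn, hj⟩) = e ⟨n, m + 1, j, hn, hj⟩ :=
  opOf_e _ _

lemma LamInv_e : LamInv (e ⟨n, m, j, hn, hj⟩) = e ⟨n, m - 1, j, hn, hj⟩ :=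
  opOf_e _ _

lemma P1_e (q M : ℝ) : P1 q M (e ⟨n, m, j, hn, hj⟩) =
    (P1Coeff q M ⟨n, m, j, hn, hj⟩ : ℂ) • e ⟨n + 1, m, j + 1, by lia, by lia⟩ :=
  opOf_e _ _

lemma Lm_e (q w : ℝ) : Lm q w (e ⟨n, m, j, hn, hj⟩) =
    (LmCoeff q w ⟨n, m, j, hn, hj⟩ : ℂ) • e ⟨n, m, j - 1, hn, by lia⟩ :=
  opOf_e _ _

end Action

lemma P1Coeff_ne_zero {q M : ℝ} (hq0 : 0 < q) (hq1 : q < 1) (hM : M ≠ 0) (s : SIdx) :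
    P1Coeff q M s ≠ 0 := by
  have hexp : 0 < 2 * s.π0 + 2 := by linarith [s.hπ0]
  have hpow : q ^ (2 * s.π0 + 2) < 1 := zpow_lt_one₀ hq0 hq1 hexp
  have hsqrt : Real.sqrt (1 - q ^ (2 * s.π0 + 2)) ≠ 0 := (Real.sqrt_pos.mpr (sub_pos.mpr hpow)).ne'
  exact mul_ne_zero (mul_ne_zero hM hsqrt) (zpow_pos hq0 _).ne'

lemma LmCoeff_pos {q : ℝ} (hq0 : 0 < q) (hq1 : q < 1) (w : ℝ) (s : SIdx) : 0 < LmCoeff q w s := by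
  have hexp : 0 < (s.π0 : ℝ) - s.j + 1 := by
    have : (s.j : ℝ) ≤ s.π0 := mod_cast s.hj
    linarith
  have hpow : 0 < 1 - q ^ ((s.π0 : ℝ) - s.j + 1) :=
    sub_pos.mpr (Real.rpow_lt_one hq0.le hq1 hexp)
  have hden : 0 < (q⁻¹ - 1) * (1 - q) :=
    mul_pos (sub_pos.mpr ((one_lt_inv₀ hq0).mpr hq1)) (sub_pos.mpr hq1)
  unfold LmCoeff
  positivity

section Invariant

variable {W : Submodule ℂ V} {n m j : ℤ} {hn : 0 ≤ n} {hj : j ≤ n}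

lemma e_mem_of_Lam_invariant (hLam : W ∈ Module.End.invtSubmodule Lam)
    (hLamInv : W ∈ Module.End.invtSubmodule LamInv) (he : e ⟨n, m, j, hn, hj⟩ ∈ W) (k : ℤ) :
    e ⟨n, k, j, hn, hj⟩ ∈ W := by
  induction k using Int.inductionOn' (b := m) with
  | zero => exact he
  | succ k _ ih => exact Lam_e ▸ hLam ih
  | pred k _ ih => exact LamInv_e ▸ hLamInv ih

lemma e_mem_of_P1_invariant {q M : ℝ} (hq0 : 0 < q) (hq1 : q < 1) (hM : M ≠ 0)
    (hP1 : W ∈ Module.End.invtSubmodule (P1 q M)) (he : e ⟨n, m, j, hn, hj⟩ ∈ W) (k : ℕ) :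
    e ⟨n + k, m, j + k, by lia, by lia⟩ ∈ W := by
  induction k with
  | zero => simpa using he
  | succ k ih =>
    have hmem := mem_of_apply_eq_smul hP1
      (Complex.ofReal_ne_zero.mpr (P1Coeff_ne_zero hq0 hq1 hM _)) (P1_e q M) ih
    simpa [add_assoc] using hmem

lemma e_mem_of_Lm_invariant {q w : ℝ} (hq0 : 0 < q) (hq1 : q < 1)
    (hLm : W ∈ Module.End.invtSubmodule (Lm q w)) (he : e ⟨n, m, j, hn, hj⟩ ∈ W) {i : ℤ}
    (hi : i ≤ j) : e ⟨n, m, i, hn, hi.trans hj⟩ ∈ W := by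
  induction i, hi using Int.leInductionDown with
  | base => exact he
  | pred i hi ih =>
    exact mem_of_apply_eq_smul hLm
      (Complex.ofReal_ne_zero.mpr (LmCoeff_pos hq0 hq1 w _).ne') (Lm_e q w) ih

end Invariant

theorem highest_weight_vector_cyclic_general {q M w : ℝ} (hq0 : 0 < q) (hq1 : q < 1) (hM : M ≠ 0)
    {W : Submodule ℂ V} (he : e ⟨0, 0, 0, le_refl 0, le_refl 0⟩ ∈ W)
    (hP1 : W ∈ Module.End.invtSubmodule (P1 q M)) (hLam : W ∈ Module.End.invtSubmodule Lam)
    (hLamInv : W ∈ Module.End.invtSubmodule LamInv)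
    (hLm : W ∈ Module.End.invtSubmodule (Lm q w)) : W = ⊤ := by
  rw [eq_top_iff, ← span_range_e, Submodule.span_le, Set.range_subset_iff]
  rintro ⟨n, m, j, hn, hj⟩
  have h_column : e ⟨0, m, 0, le_refl 0, le_refl 0⟩ ∈ W :=
    e_mem_of_Lam_invariant hLam hLamInv he m
  have h_edge : e ⟨n, m, n, hn, le_refl n⟩ ∈ W := by
    lift n to ℕ using hn
    simpa using e_mem_of_P1_invariant hq0 hq1 hM hP1 h_column n
  exact e_mem_of_Lm_invariant hq0 hq1 hLm h_edge hj

/-- The highest-weight vector `e_{0,0,0}` is cyclic: the only linear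
subspace of `V` containing it and invariant under `P₁, P₋₁, Λ, Λ⁻¹, L⁺, L⁻` is `V`. -/
theorem highest_weight_vector_cyclic
    (q M ε w : ℝ) (hq0 : 0 < q) (hq1 : q < 1) (hM : 0 < M)
    (hε : ε = 1 ∨ ε = -1) (hw : 0 ≤ w) :
    ∀ W : Submodule ℂ V,
      e ⟨0, 0, 0, le_refl 0, le_refl 0⟩ ∈ W →
      (∀ v ∈ W, P1 q M v ∈ W) →
      (∀ v ∈ W, Pm1 q M v ∈ W) →
      (∀ v ∈ W, Lam v ∈ W) →
      (∀ v ∈ W, LamInv v ∈ W) →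
      (∀ v ∈ W, Lp q w v ∈ W) →
      (∀ v ∈ W, Lm q w v ∈ W) →
      W = ⊤ := by
  intro W he hP1 _ hLam hLamInv _ hLm
  exact highest_weight_vector_cyclic_general hq0 hq1 hM.ne' he hP1 hLam hLamInv hLm
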